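/- arXiv:1610.02446 — 2 statements merged into one kernel-verified Lean document; each statement's English description precedes it below -/
import Mathlib

section
/- Let α ∈ [1,3) and let W be a graphon that maximizes d₁ − α·d₃ over all graphons, i.e., d₁(W') − α·d₃(W') ≤ d₁(W) − α·d₃(W) for every graphon W'. Then for almost every pair (x,y) ∈ [0,1]² with W(x,y) < 1, the inequality deg_W(x) + deg_W(y) ≥ 1/2 holds. Equivalently, the set {(x,y) ∈ [0,1]² : W(x,y) < 1 and deg_W(x) + deg_W(y) < 1/2} has Lebesgue measure zero. -/
/-!
The proof is a first-order variation argument. Write `Φ = d1 - α * d3`. The functional derivative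
of `Φ` at `W` in the direction of a symmetric `h` is
`3 ∫∫ h(x,y) (1 - 2 (deg x + deg y) + (3 - α) codeg(x,y))`,
where `codeg(x,y) = ∫ W(x,z) W(y,z) dz ≥ 0`. Take `h = (1 - W) 1_{deg x + deg y < 1/2}`
(`perturbDir`). Then `W + t h` is a graphon for `t ∈ [0,1]`, and `Φ (W + t h)` is a cubic polynomial
in `t`, so maximality forces the linear coefficient to be at most `0` (`linear_coeff_nonpos`).
As `α ≤ 3`, that coefficient is at least
`3 ∫∫ h(x,y) (1 - 2 (deg x + deg y))`, whose integrand is nonnegative, and positive on the set in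
question. Hence this set is null.

All triple integrals are computed on `(μ.prod μ).prod μ`, with `μ` Lebesgue measure on `[0,1]`; the
linear coefficient is put in the form above by permuting the three coordinates.
-/

open MeasureTheory Real

/-- A graphon: a symmetric measurable function `W : ℝ → ℝ → ℝ` taking values in `[0,1]`
(only its values on `[0,1]²` matter). -/
structure Graphon where
  W : ℝ → ℝ → ℝ
  measurable : Measurable (Function.uncurry W)
  mem_Icc : ∀ x y, W x y ∈ Set.Icc (0 : ℝ) 1
  symm : ∀ x y, W x y = W y x

/-- Density of the empty 3-vertex graph (co-triangle). -/
noncomputable def d0 (G : Graphon) : ℝ :=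
  ∫ x in Set.Icc (0 : ℝ) 1, ∫ y in Set.Icc (0 : ℝ) 1, ∫ z in Set.Icc (0 : ℝ) 1,
    (1 - G.W x y) * (1 - G.W y z) * (1 - G.W x z)

/-- Density of the one-edge 3-vertex graph (co-cherry). -/
noncomputable def d1 (G : Graphon) : ℝ :=
  3 * ∫ x in Set.Icc (0 : ℝ) 1, ∫ y in Set.Icc (0 : ℝ) 1, ∫ z in Set.Icc (0 : ℝ) 1,
    G.W x y * (1 - G.W y z) * (1 - G.W x z)

/-- Density of the two-edge 3-vertex graph (cherry). -/
noncomputable def d2 (G : Graphon) : ℝ :=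
  3 * ∫ x in Set.Icc (0 : ℝ) 1, ∫ y in Set.Icc (0 : ℝ) 1, ∫ z in Set.Icc (0 : ℝ) 1,
    G.W x y * G.W x z * (1 - G.W y z)

/-- Triangle density. -/
noncomputable def d3 (G : Graphon) : ℝ :=
  ∫ x in Set.Icc (0 : ℝ) 1, ∫ y in Set.Icc (0 : ℝ) 1, ∫ z in Set.Icc (0 : ℝ) 1,
    G.W x y * G.W y z * G.W x z

/-- Edge density. -/
noncomputable def dE (G : Graphon) : ℝ :=
  ∫ x in Set.Icc (0 : ℝ) 1, ∫ y in Set.Icc (0 : ℝ) 1, G.W x y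

/-- Degree of a vertex `x` in a graphon. -/
noncomputable def deg (G : Graphon) (x : ℝ) : ℝ :=
  ∫ y in Set.Icc (0 : ℝ) 1, G.W x y

noncomputable def hA1 (σ : ℝ) : ℝ :=
  (9 - 48 * σ + 114 * σ ^ 2 - 120 * σ ^ 3
      + 3 * (1 - 2 * σ) * (4 * σ - 1) ^ 2 * Real.sqrt (5 - 12 * σ)) / (10 - 24 * σ)

noncomputable def hA3 (σ : ℝ) : ℝ :=
  (2 - 18 * σ + 57 * σ ^ 2 - 60 * σ ^ 3) / (5 - 12 * σ)

def hB1 (σ : ℝ) : ℝ := 6 * σ - 18 * σ ^ 2 + 18 * σ ^ 3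

def hB3 (σ : ℝ) : ℝ := 1 - 6 * σ + 12 * σ ^ 2 - 6 * σ ^ 3

/-- The objective function of the optimization problem from Proposition 10. -/
def F (α x1 x2 x3 y1 y2 y3 : ℝ) : ℝ :=
  (x1 ^ 3 * (3 - α - 3 * (3 - α) * y1 - 3 * (α - 1) * y1 ^ 2) + 3 * x1 ^ 2 * y1) +
  (x2 ^ 3 * (3 - α - 3 * (3 - α) * y2 - 3 * (α - 1) * y2 ^ 2) + 3 * x2 ^ 2 * y2) +
  (x3 ^ 3 * (3 - α - 3 * (3 - α) * y3 - 3 * (α - 1) * y3 ^ 2) + 3 * x3 ^ 2 * y3)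

/-! ### Bounded measurable functions and integration over the unit cube -/

/-- Lebesgue measure restricted to `[0,1]`. -/
noncomputable abbrev unitMeasure : Measure ℝ := volume.restrict (Set.Icc (0 : ℝ) 1)

instance unitMeasure_isProbabilityMeasure : IsProbabilityMeasure unitMeasure := ⟨by simp⟩

/-- Lebesgue measure on the unit cube, whose points are written `((x, y), z)`. -/
noncomputable abbrev cubeMeasure : Measure ((ℝ × ℝ) × ℝ) :=
  (unitMeasure.prod unitMeasure).prod unitMeasure

/-- Bounded measurable real functions. -/
def BddMeas {X : Type*} [MeasurableSpace X] (f : X → ℝ) : Prop :=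
  Measurable f ∧ ∃ C, ∀ p, |f p| ≤ C

namespace BddMeas

variable {X Y : Type*} [MeasurableSpace X] [MeasurableSpace Y] {f g : X → ℝ}

lemma const (c : ℝ) : BddMeas (fun _ : X => c) := ⟨measurable_const, |c|, fun _ => le_rfl⟩

lemma add (hf : BddMeas f) (hg : BddMeas g) : BddMeas (fun p => f p + g p) := by
  obtain ⟨mf, C, hC⟩ := hf
  obtain ⟨mg, D, hD⟩ := hg
  exact ⟨mf.add mg, C + D, fun p => (abs_add_le _ _).trans (add_le_add (hC p) (hD p))⟩

lemma mul (hf : BddMeas f) (hg : BddMeas g) : BddMeas (fun p => f p * g p) := by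
  obtain ⟨mf, C, hC⟩ := hf
  obtain ⟨mg, D, hD⟩ := hg
  refine ⟨mf.mul mg, C * D, fun p => ?_⟩
  rw [abs_mul]
  exact mul_le_mul (hC p) (hD p) (abs_nonneg _) ((abs_nonneg _).trans (hC p))

lemma sub (hf : BddMeas f) (hg : BddMeas g) : BddMeas (fun p => f p - g p) := by
  have h := hf.add ((const (-1)).mul hg)
  simpa [sub_eq_add_neg] using h

lemma comp (hf : BddMeas f) {u : Y → X} (hu : Measurable u) : BddMeas (fun p => f (u p)) := by
  obtain ⟨mf, C, hC⟩ := hf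
  exact ⟨mf.comp hu, C, fun p => hC _⟩

lemma integrable (hf : BddMeas f) (μ : Measure X) [IsFiniteMeasure μ] : Integrable f μ := by
  obtain ⟨mf, C, hC⟩ := hf
  exact Integrable.of_bound mf.aestronglyMeasurable C (Filter.Eventually.of_forall hC)

end BddMeas

lemma integral_cube {F : (ℝ × ℝ) × ℝ → ℝ} (hF : BddMeas F) :
    ∫ x in Set.Icc (0 : ℝ) 1, ∫ y in Set.Icc (0 : ℝ) 1, ∫ z in Set.Icc (0 : ℝ) 1, F ((x, y), z)
      = ∫ p, F p ∂cubeMeasure := by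
  have hi := hF.integrable cubeMeasure
  rw [integral_prod _ hi, integral_prod _ hi.integral_prod_left]

/-- The rotation `((x, y), z) ↦ ((z, x), y)` preserves the cube measure. -/
lemma integral_rotate {F : (ℝ × ℝ) × ℝ → ℝ} :
    ∫ p, F ((p.2, p.1.1), p.1.2) ∂cubeMeasure = ∫ p, F p ∂cubeMeasure := by
  have h1 : MeasurePreserving (MeasurableEquiv.prodComm (α := ℝ × ℝ) (β := ℝ)) cubeMeasure
      (unitMeasure.prod (unitMeasure.prod unitMeasure)) := Measure.measurePreserving_swap
  have h2 : MeasurePreserving (MeasurableEquiv.prodAssoc (α := ℝ) (β := ℝ) (γ := ℝ)).symm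
      (unitMeasure.prod (unitMeasure.prod unitMeasure)) cubeMeasure :=
    (measurePreserving_prodAssoc unitMeasure unitMeasure unitMeasure).symm
  have h := h2.comp h1
  exact h.integral_comp
    (MeasurableEquiv.measurableEmbedding _ |>.comp (MeasurableEquiv.measurableEmbedding _)) F

/-- The transposition `((x, y), z) ↦ ((y, x), z)` preserves the cube measure. -/
lemma integral_swap {F : (ℝ × ℝ) × ℝ → ℝ} :
    ∫ p, F ((p.1.2, p.1.1), p.2) ∂cubeMeasure = ∫ p, F p ∂cubeMeasure := by
  have h1 : MeasurePreserving (MeasurableEquiv.prodComm (α := ℝ) (β := ℝ))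
      (unitMeasure.prod unitMeasure) (unitMeasure.prod unitMeasure) :=
    Measure.measurePreserving_swap
  have h := h1.prod (MeasurePreserving.id unitMeasure)
  exact h.integral_comp
    (((MeasurableEquiv.prodComm (α := ℝ) (β := ℝ)).prodCongr
      (MeasurableEquiv.refl ℝ)).measurableEmbedding) F

lemma bddMeas_of_unit {f : ℝ → ℝ → ℝ} (hm : Measurable (Function.uncurry f))
    (hf : ∀ x y, f x y ∈ Set.Icc (0 : ℝ) 1) : BddMeas (Function.uncurry f) :=
  ⟨hm, 1, fun p => abs_le.2 ⟨(by norm_num : (-1 : ℝ) ≤ 0).trans (hf p.1 p.2).1, (hf p.1 p.2).2⟩⟩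

/-! ### The first variation of the objective -/

/-- The integrand of `d1 - α * d3` at a triangle with edge weights `a`, `b`, `c`. -/
def objInt (α a b c : ℝ) : ℝ := 3 * (a * (1 - b) * (1 - c)) - α * (a * b * c)

lemma objective_eq (α : ℝ) (G : Graphon) :
    d1 G - α * d3 G
      = ∫ p, objInt α (G.W p.1.1 p.1.2) (G.W p.1.2 p.2) (G.W p.1.1 p.2) ∂cubeMeasure := by
  have hW := bddMeas_of_unit G.measurable G.mem_Icc
  have ha : BddMeas (fun p : (ℝ × ℝ) × ℝ => G.W p.1.1 p.1.2) :=
    hW.comp (u := fun p : (ℝ × ℝ) × ℝ => (p.1.1, p.1.2)) (by fun_prop)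
  have hb : BddMeas (fun p : (ℝ × ℝ) × ℝ => G.W p.1.2 p.2) :=
    hW.comp (u := fun p : (ℝ × ℝ) × ℝ => (p.1.2, p.2)) (by fun_prop)
  have hc : BddMeas (fun p : (ℝ × ℝ) × ℝ => G.W p.1.1 p.2) :=
    hW.comp (u := fun p : (ℝ × ℝ) × ℝ => (p.1.1, p.2)) (by fun_prop)
  have h1 := (ha.mul ((BddMeas.const 1).sub hb)).mul ((BddMeas.const 1).sub hc)
  have h3 := (ha.mul hb).mul hc
  have e1 := integral_cube h1
  have e3 := integral_cube h3
  unfold d1 d3 objInt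
  rw [integral_sub ((h1.integrable cubeMeasure).const_mul 3)
    ((h3.integrable cubeMeasure).const_mul α), integral_const_mul, integral_const_mul, ← e1, ← e3]

/-- A cubic polynomial without constant term that is nonpositive on `(0,1]` has nonpositive linear
coefficient. -/
lemma linear_coeff_nonpos {L Q C : ℝ}
    (h : ∀ t : ℝ, 0 < t → t ≤ 1 → t * L + t ^ 2 * Q + t ^ 3 * C ≤ 0) : L ≤ 0 := by
  by_contra! hL
  have hD : 0 < L + |Q| + |C| := by positivity
  -- At this `t` the linear term beats the bound `t ^ 2 * (|Q| + |C|)` on the remaining terms.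
  set t := L / (L + |Q| + |C|) with ht
  have ht0 : 0 < t := by positivity
  have ht1 : t ≤ 1 := by
    rw [ht, div_le_one hD]; linarith [abs_nonneg Q, abs_nonneg C]
  have hL' : L = t * (L + |Q| + |C|) := by rw [ht]; field_simp
  have h1 : L + t * Q + t ^ 2 * C ≤ 0 := by
    have := h t ht0 ht1
    by_contra! hc
    nlinarith [mul_pos ht0 hc]
  have h2 : t * (-|Q|) ≤ t * Q := mul_le_mul_of_nonneg_left (neg_abs_le Q) ht0.le
  have h3 : t ^ 2 * (-|C|) ≤ t ^ 2 * C := mul_le_mul_of_nonneg_left (neg_abs_le C) (by positivity)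
  have h4 : t ^ 2 * |C| ≤ t * |C| := mul_le_mul_of_nonneg_right (by nlinarith) (abs_nonneg C)
  nlinarith [mul_pos ht0 hL]

/-- The first variation of the objective at a maximizer, in an admissible direction `h`, is
nonpositive. -/
lemma first_variation_nonpos (α : ℝ) (G : Graphon)
    (hmax : ∀ G' : Graphon, d1 G' - α * d3 G' ≤ d1 G - α * d3 G)
    (h : ℝ → ℝ → ℝ) (hm : Measurable (Function.uncurry h)) (hsymm : ∀ x y, h x y = h y x)
    (h0 : ∀ x y, 0 ≤ h x y) (h1 : ∀ x y, h x y ≤ 1 - G.W x y) :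
    ∫ p, h p.1.1 p.1.2 * (1 - 2 * G.W p.1.2 p.2 - 2 * G.W p.1.1 p.2
      + (3 - α) * (G.W p.1.2 p.2 * G.W p.1.1 p.2)) ∂cubeMeasure ≤ 0 := by
  have hW := bddMeas_of_unit G.measurable G.mem_Icc
  have hh := bddMeas_of_unit hm fun x y =>
    ⟨h0 x y, (h1 x y).trans (by linarith [(G.mem_Icc x y).1])⟩
  have mu : Measurable (fun p : (ℝ × ℝ) × ℝ => (p.1.1, p.1.2)) := by fun_prop
  have mv : Measurable (fun p : (ℝ × ℝ) × ℝ => (p.1.2, p.2)) := by fun_prop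
  have mw : Measurable (fun p : (ℝ × ℝ) × ℝ => (p.1.1, p.2)) := by fun_prop
  -- Weights and increments of the edges `xy`, `yz`, `xz`.
  set a : (ℝ × ℝ) × ℝ → ℝ := fun p => G.W p.1.1 p.1.2 with hadef
  set b : (ℝ × ℝ) × ℝ → ℝ := fun p => G.W p.1.2 p.2 with hbdef
  set c : (ℝ × ℝ) × ℝ → ℝ := fun p => G.W p.1.1 p.2 with hcdef
  set u : (ℝ × ℝ) × ℝ → ℝ := fun p => h p.1.1 p.1.2 with hudef
  set v : (ℝ × ℝ) × ℝ → ℝ := fun p => h p.1.2 p.2 with hvdef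
  set w : (ℝ × ℝ) × ℝ → ℝ := fun p => h p.1.1 p.2 with hwdef
  have ha : BddMeas a := hW.comp mu
  have hb : BddMeas b := hW.comp mv
  have hc : BddMeas c := hW.comp mw
  have hu : BddMeas u := hh.comp mu
  have hv : BddMeas v := hh.comp mv
  have hw : BddMeas w := hh.comp mw
  have one : BddMeas (fun _ : (ℝ × ℝ) × ℝ => (1 : ℝ)) := BddMeas.const 1
  have three : BddMeas (fun _ : (ℝ × ℝ) × ℝ => (3 : ℝ)) := BddMeas.const 3
  have alp : BddMeas (fun _ : (ℝ × ℝ) × ℝ => α) := BddMeas.const α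
  have hP0 : BddMeas (fun p => 3 * (a p * (1 - b p) * (1 - c p)) - α * (a p * b p * c p)) :=
    (three.mul ((ha.mul (one.sub hb)).mul (one.sub hc))).sub (alp.mul ((ha.mul hb).mul hc))
  -- The linear coefficient splits into one contribution for each perturbed edge.
  have hU : BddMeas (fun p => u p * (3 * ((1 - b p) * (1 - c p)) - α * (b p * c p))) :=
    hu.mul ((three.mul ((one.sub hb).mul (one.sub hc))).sub (alp.mul (hb.mul hc)))
  have hV : BddMeas (fun p => v p * ((0 - 3) * (a p * (1 - c p)) - α * (a p * c p))) :=
    hv.mul ((((BddMeas.const 0).sub three).mul (ha.mul (one.sub hc))).sub (alp.mul (ha.mul hc)))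
  have hX : BddMeas (fun p => w p * ((0 - 3) * (a p * (1 - b p)) - α * (a p * b p))) :=
    hw.mul ((((BddMeas.const 0).sub three).mul (ha.mul (one.sub hb))).sub (alp.mul (ha.mul hb)))
  have hP2 : BddMeas (fun p => 3 * (a p * (v p * w p) - u p * v p * (1 - c p)
      - u p * w p * (1 - b p)) - α * (a p * (v p * w p) + u p * v p * c p + u p * w p * b p)) :=
    (three.mul (((ha.mul (hv.mul hw)).sub ((hu.mul hv).mul (one.sub hc))).sub
      ((hu.mul hw).mul (one.sub hb)))).sub
      (alp.mul (((ha.mul (hv.mul hw)).add ((hu.mul hv).mul hc)).add ((hu.mul hw).mul hb)))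
  have hP3 : BddMeas (fun p => (3 - α) * (u p * v p * w p)) :=
    (three.sub alp).mul ((hu.mul hv).mul hw)
  have i0 := hP0.integrable cubeMeasure
  have iU := hU.integrable cubeMeasure
  have iV := hV.integrable cubeMeasure
  have iX := hX.integrable cubeMeasure
  have key := linear_coeff_nonpos
    (L := ∫ p, (u p * (3 * ((1 - b p) * (1 - c p)) - α * (b p * c p))
      + v p * ((0 - 3) * (a p * (1 - c p)) - α * (a p * c p))
      + w p * ((0 - 3) * (a p * (1 - b p)) - α * (a p * b p))) ∂cubeMeasure)
    (Q := ∫ p, (3 * (a p * (v p * w p) - u p * v p * (1 - c p)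
      - u p * w p * (1 - b p)) - α * (a p * (v p * w p) + u p * v p * c p + u p * w p * b p))
      ∂cubeMeasure)
    (C := ∫ p, (3 - α) * (u p * v p * w p) ∂cubeMeasure) ?_
  · -- Transposing coordinates moves the increment of each edge to the edge `xy`.
    have eV : ∫ p, v p * ((0 - 3) * (a p * (1 - c p)) - α * (a p * c p)) ∂cubeMeasure
        = ∫ p, u p * ((0 - 3) * (b p * (1 - c p)) - α * (b p * c p)) ∂cubeMeasure := by
      rw [← integral_rotate, ← integral_swap]
      refine integral_congr_ae (Filter.Eventually.of_forall fun p => ?_)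
      simp only [hadef, hbdef, hcdef, hudef, hvdef]
      rw [G.symm p.2 p.1.2, G.symm p.2 p.1.1, hsymm p.1.2 p.1.1]
    have eX : ∫ p, w p * ((0 - 3) * (a p * (1 - b p)) - α * (a p * b p)) ∂cubeMeasure
        = ∫ p, u p * ((0 - 3) * (c p * (1 - b p)) - α * (c p * b p)) ∂cubeMeasure := by
      rw [← integral_swap, ← integral_rotate]
      refine integral_congr_ae (Filter.Eventually.of_forall fun p => ?_)
      simp only [hadef, hbdef, hcdef, hudef, hwdef]
      rw [G.symm p.2 p.1.2]
    have hU' : BddMeas (fun p => u p * ((0 - 3) * (b p * (1 - c p)) - α * (b p * c p))) :=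
      hu.mul ((((BddMeas.const 0).sub three).mul (hb.mul (one.sub hc))).sub (alp.mul (hb.mul hc)))
    have hU'' : BddMeas (fun p => u p * ((0 - 3) * (c p * (1 - b p)) - α * (c p * b p))) :=
      hu.mul ((((BddMeas.const 0).sub three).mul (hc.mul (one.sub hb))).sub (alp.mul (hc.mul hb)))
    rw [integral_add ((hU.add hV).integrable _) iX, integral_add iU iV, eV, eX,
      ← integral_add iU (hU'.integrable _),
      ← integral_add ((hU.add hU').integrable _) (hU''.integrable _)] at key
    have e : ∀ p, u p * (3 * ((1 - b p) * (1 - c p)) - α * (b p * c p))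
        + u p * ((0 - 3) * (b p * (1 - c p)) - α * (b p * c p))
        + u p * ((0 - 3) * (c p * (1 - b p)) - α * (c p * b p))
        = 3 * (u p * (1 - 2 * b p - 2 * c p + (3 - α) * (b p * c p))) := fun p => by ring
    simp only [e] at key
    rw [integral_const_mul] at key
    linarith
  · intro t ht0 ht1
    let G' : Graphon :=
      { W := fun x y => G.W x y + t * h x y
        measurable := G.measurable.add (hm.const_mul t)
        mem_Icc := fun x y => by
          have p0 := mul_nonneg ht0.le (h0 x y)
          have p1 := mul_le_mul_of_nonneg_right ht1 (h0 x y)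
          exact ⟨add_nonneg (G.mem_Icc x y).1 p0, by linarith [h1 x y]⟩
        symm := fun x y => by rw [G.symm, hsymm] }
    have hle := hmax G'
    rw [objective_eq, objective_eq] at hle
    have e : ∀ p : (ℝ × ℝ) × ℝ, objInt α (G'.W p.1.1 p.1.2) (G'.W p.1.2 p.2) (G'.W p.1.1 p.2)
        = (3 * (a p * (1 - b p) * (1 - c p)) - α * (a p * b p * c p))
        + t * (u p * (3 * ((1 - b p) * (1 - c p)) - α * (b p * c p))
          + v p * ((0 - 3) * (a p * (1 - c p)) - α * (a p * c p))
          + w p * ((0 - 3) * (a p * (1 - b p)) - α * (a p * b p)))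
        + t ^ 2 * (3 * (a p * (v p * w p) - u p * v p * (1 - c p)
          - u p * w p * (1 - b p)) - α * (a p * (v p * w p) + u p * v p * c p + u p * w p * b p))
        + t ^ 3 * ((3 - α) * (u p * v p * w p)) := fun p => by
      simp only [objInt, G', hadef, hbdef, hcdef, hudef, hvdef, hwdef]
      ring
    have j1 := (BddMeas.const t).mul ((hU.add hV).add hX)
    have j2 := (BddMeas.const (t ^ 2)).mul hP2
    have j3 := (BddMeas.const (t ^ 3)).mul hP3
    have hsplit : ∫ p, objInt α (G'.W p.1.1 p.1.2) (G'.W p.1.2 p.2) (G'.W p.1.1 p.2) ∂cubeMeasure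
        = _ := integral_congr_ae (Filter.Eventually.of_forall e)
    rw [hsplit, integral_add (((hP0.add j1).add j2).integrable _) (j3.integrable _),
      integral_add ((hP0.add j1).integrable _) (j2.integrable _),
      integral_add i0 (j1.integrable _), integral_const_mul, integral_const_mul, integral_const_mul] at hle
    simp only [objInt] at hle
    linarith

/-! ### The perturbation at pairs of small degree sum -/

lemma measurable_deg (G : Graphon) : Measurable (deg G) :=
  (G.measurable.stronglyMeasurable.integral_prod_right (ν := unitMeasure)).measurable

/-- The direction of perturbation: `1 - W` on the pairs with degree sum below `1/2`, and `0`
elsewhere. -/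
noncomputable def perturbDir (G : Graphon) (x y : ℝ) : ℝ :=
  if deg G x + deg G y < 1 / 2 then 1 - G.W x y else 0

lemma measurable_perturbDir (G : Graphon) : Measurable (Function.uncurry (perturbDir G)) := by
  have hd := measurable_deg G
  exact Measurable.ite (measurableSet_lt
    ((hd.comp measurable_fst).add (hd.comp measurable_snd)) measurable_const)
    (measurable_const.sub G.measurable) measurable_const

theorem maximizer_nonadjacent_degree_sum (α : ℝ) (hα : α ∈ Set.Ico (1 : ℝ) 3)
    (G : Graphon) (hmax : ∀ G' : Graphon, d1 G' - α * d3 G' ≤ d1 G - α * d3 G) :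
    MeasureTheory.volume
      {p : ℝ × ℝ | p.1 ∈ Set.Icc (0 : ℝ) 1 ∧ p.2 ∈ Set.Icc (0 : ℝ) 1 ∧
        G.W p.1 p.2 < 1 ∧ deg G p.1 + deg G p.2 < 1 / 2} = 0 := by
  have hdir0 : ∀ x y, 0 ≤ perturbDir G x y := fun x y => by
    unfold perturbDir; split_ifs <;> linarith [(G.mem_Icc x y).2]
  have hdir1 : ∀ x y, perturbDir G x y ≤ 1 - G.W x y := fun x y => by
    unfold perturbDir; split_ifs <;> linarith [(G.mem_Icc x y).2]
  have hvar := first_variation_nonpos α G hmax (perturbDir G) (measurable_perturbDir G)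
    (fun x y => by unfold perturbDir; rw [add_comm, G.symm]) hdir0 hdir1
  have hW := bddMeas_of_unit G.measurable G.mem_Icc
  have hh := bddMeas_of_unit (measurable_perturbDir G) fun x y =>
    ⟨hdir0 x y, (hdir1 x y).trans (by linarith [(G.mem_Icc x y).1])⟩
  have hb : BddMeas (fun p : (ℝ × ℝ) × ℝ => G.W p.1.2 p.2) :=
    hW.comp (u := fun p : (ℝ × ℝ) × ℝ => (p.1.2, p.2)) (by fun_prop)
  have hc : BddMeas (fun p : (ℝ × ℝ) × ℝ => G.W p.1.1 p.2) :=
    hW.comp (u := fun p : (ℝ × ℝ) × ℝ => (p.1.1, p.2)) (by fun_prop)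
  have hu : BddMeas (fun p : (ℝ × ℝ) × ℝ => perturbDir G p.1.1 p.1.2) :=
    hh.comp (u := fun p : (ℝ × ℝ) × ℝ => (p.1.1, p.1.2)) (by fun_prop)
  have hlow : BddMeas (fun p : (ℝ × ℝ) × ℝ =>
      perturbDir G p.1.1 p.1.2 * (1 - 2 * G.W p.1.2 p.2 - 2 * G.W p.1.1 p.2)) :=
    hu.mul (((BddMeas.const 1).sub ((BddMeas.const 2).mul hb)).sub ((BddMeas.const 2).mul hc))
  have hfull : BddMeas (fun p : (ℝ × ℝ) × ℝ =>
      perturbDir G p.1.1 p.1.2 * (1 - 2 * G.W p.1.2 p.2 - 2 * G.W p.1.1 p.2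
        + (3 - α) * (G.W p.1.2 p.2 * G.W p.1.1 p.2))) :=
    hu.mul ((((BddMeas.const 1).sub ((BddMeas.const 2).mul hb)).sub
      ((BddMeas.const 2).mul hc)).add ((BddMeas.const (3 - α)).mul (hb.mul hc)))
  -- Since `α ≤ 3`, the codegree term may be dropped.
  have hle : ∫ p : (ℝ × ℝ) × ℝ, perturbDir G p.1.1 p.1.2
      * (1 - 2 * G.W p.1.2 p.2 - 2 * G.W p.1.1 p.2) ∂cubeMeasure ≤ 0 := by
    refine (integral_mono (hlow.integrable _) (hfull.integrable _) fun p => ?_).trans hvar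
    refine mul_le_mul_of_nonneg_left ?_ (hdir0 _ _)
    have := mul_nonneg (sub_nonneg.2 hα.2.le)
      (mul_nonneg (G.mem_Icc p.1.2 p.2).1 (G.mem_Icc p.1.1 p.2).1)
    linarith
  have hinner : ∀ q : ℝ × ℝ, ∫ z, perturbDir G q.1 q.2
      * (1 - 2 * G.W q.2 z - 2 * G.W q.1 z) ∂unitMeasure
      = perturbDir G q.1 q.2 * (1 - 2 * deg G q.2 - 2 * deg G q.1) := fun q => by
    have s : ∀ x, Integrable (fun z => G.W x z) unitMeasure := fun x =>
      (hW.comp (u := fun z : ℝ => (x, z)) (by fun_prop)).integrable _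
    have s' : Integrable (fun z => 1 - 2 * G.W q.2 z) unitMeasure :=
      (integrable_const 1).sub ((s q.2).const_mul 2)
    rw [integral_const_mul, integral_sub s' ((s q.1).const_mul 2), integral_sub (integrable_const 1) ((s q.2).const_mul 2),
      integral_const_mul, integral_const_mul]
    simp [deg]
  have hint := (hlow.integrable cubeMeasure).integral_prod_left
  rw [integral_prod _ (hlow.integrable cubeMeasure)] at hle
  simp only [hinner] at hle hint
  have hnn : ∀ q : ℝ × ℝ, 0 ≤ perturbDir G q.1 q.2 * (1 - 2 * deg G q.2 - 2 * deg G q.1) :=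
    fun q => by
      by_cases hq : deg G q.1 + deg G q.2 < 1 / 2
      · exact mul_nonneg (hdir0 _ _) (by linarith)
      · simp only [perturbDir, if_neg hq, zero_mul, le_refl]
  have hae := (integral_eq_zero_iff_of_nonneg hnn hint).1 (le_antisymm hle (integral_nonneg hnn))
  rw [Measure.prod_restrict] at hae
  have hnull := (ae_restrict_iff' (measurableSet_Icc.prod measurableSet_Icc)).1 hae
  rw [← Measure.volume_eq_prod] at hnull
  refine measure_mono_null ?_ (ae_iff.1 hnull)
  rintro q ⟨hq1, hq2, hq3, hq4⟩ hq
  have hz := hq ⟨hq1, hq2⟩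
  simp only [perturbDir, if_pos hq4, Pi.zero_apply, mul_eq_zero] at hz
  rcases hz with hz | hz <;> linarith
end

section
/- A graphon W satisfies d₁(W) = 3·d₃(W) + 3/8 if and only if deg_W(x) = 1/4 for almost every x ∈ [0,1]. -/
/-!
Expanding the co-cherry integrand,
`W(x,y)(1 - W(y,z))(1 - W(x,z)) = W(x,y) - W(x,y)W(y,z) - W(x,y)W(x,z) + W(x,y)W(y,z)W(x,z)`,
and integrating gives `d₁ = 3 (∫ deg - 2 ∫ deg² + d₃)`: both cherry terms integrate to `∫ deg²`, by
Fubini and the symmetry of `W`. Completing the square,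
`d₁ = 3 d₃ + 3/8 - 6 ∫ (deg - 1/4)²` (`Graphon.d1_eq`), so equality `d₁ = 3 d₃ + 3/8` holds exactly
when the nonnegative function `(deg - 1/4)²` has integral zero, that is, vanishes almost everywhere.
-/

open MeasureTheory Real

/-- The Lebesgue measure on the unit interval, viewed as a measure on `ℝ`. -/
local notation "μI" => (volume.restrict (Set.Icc (0 : ℝ) 1) : Measure ℝ)

lemma integrable_of_mem_Icc {f : ℝ → ℝ} (hf : Measurable f)
    (h : ∀ x, f x ∈ Set.Icc (0 : ℝ) 1) : Integrable f μI :=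
  Integrable.of_bound hf.aestronglyMeasurable 1 (Filter.Eventually.of_forall fun x => by
    rw [Real.norm_eq_abs, abs_of_nonneg (h x).1]; exact (h x).2)

lemma integral_mem_Icc {f : ℝ → ℝ} (hf : Measurable f)
    (h : ∀ x, f x ∈ Set.Icc (0 : ℝ) 1) : ∫ x, f x ∂μI ∈ Set.Icc (0 : ℝ) 1 := by
  refine ⟨integral_nonneg fun x => (h x).1, ?_⟩
  have := integral_mono (integrable_of_mem_Icc hf h) (integrable_const 1) fun x => (h x).2
  simpa using this

lemma integral_sub_sub_add {f g h k : ℝ → ℝ} (hf : Integrable f μI) (hg : Integrable g μI)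
    (hh : Integrable h μI) (hk : Integrable k μI) :
    ∫ x, (f x - g x - h x + k x) ∂μI =
      (∫ x, f x ∂μI) - (∫ x, g x ∂μI) - (∫ x, h x ∂μI) + ∫ x, k x ∂μI :=
  (integral_add ((hf.sub hg).sub hh) hk).trans
    (by rw [integral_sub' (hf.sub hg) hh, integral_sub' hf hg])

lemma mul_mem_Icc {a b : ℝ} (ha : a ∈ Set.Icc (0 : ℝ) 1) (hb : b ∈ Set.Icc (0 : ℝ) 1) :
    a * b ∈ Set.Icc (0 : ℝ) 1 :=
  ⟨mul_nonneg ha.1 hb.1, mul_le_one₀ ha.2 hb.1 hb.2⟩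

namespace Graphon

variable (G : Graphon)

lemma measurable_comp {α : Type*} [MeasurableSpace α] {f g : α → ℝ} (hf : Measurable f)
    (hg : Measurable g) : Measurable fun a => G.W (f a) (g a) :=
  G.measurable.comp (hf.prodMk hg)

lemma measurable_deg : Measurable (deg G) :=
  (G.measurable.stronglyMeasurable.integral_prod_right (ν := μI)).measurable

lemma deg_mem_Icc (x : ℝ) : deg G x ∈ Set.Icc (0 : ℝ) 1 :=
  integral_mem_Icc (G.measurable_comp measurable_const measurable_id) (G.mem_Icc x)

/-- The triangle density rooted at the pair of vertices `(x, y)`. -/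
noncomputable def triangleAt (x y : ℝ) : ℝ := ∫ z, G.W x y * G.W y z * G.W x z ∂μI

lemma measurable_triangleAt : Measurable (Function.uncurry G.triangleAt) := by
  have h : Measurable (fun p : (ℝ × ℝ) × ℝ =>
      G.W p.1.1 p.1.2 * G.W p.1.2 p.2 * G.W p.1.1 p.2) :=
    ((G.measurable_comp (by fun_prop) (by fun_prop)).mul
      (G.measurable_comp (by fun_prop) (by fun_prop))).mul
      (G.measurable_comp (by fun_prop) (by fun_prop))
  exact (h.stronglyMeasurable.integral_prod_right' (ν := μI)).measurable

lemma measurable_section (x : ℝ) : Measurable (G.W x) :=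
  G.measurable_comp measurable_const measurable_id

lemma triangleAt_mem_Icc (x y : ℝ) : G.triangleAt x y ∈ Set.Icc (0 : ℝ) 1 :=
  integral_mem_Icc
    (((G.measurable_section y).const_mul _).mul (G.measurable_section x))
    fun z => mul_mem_Icc (mul_mem_Icc (G.mem_Icc x y) (G.mem_Icc y z)) (G.mem_Icc x z)

lemma integral_coCherry_inner (x y : ℝ) :
    ∫ z, G.W x y * (1 - G.W y z) * (1 - G.W x z) ∂μI =
      G.W x y - G.W x y * deg G y - G.W x y * deg G x + G.triangleAt x y := by
  have hy := (integrable_of_mem_Icc (G.measurable_section y) (G.mem_Icc y)).const_mul (G.W x y)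
  have hx := (integrable_of_mem_Icc (G.measurable_section x) (G.mem_Icc x)).const_mul (G.W x y)
  have ht : Integrable (fun z => G.W x y * G.W y z * G.W x z) μI := integrable_of_mem_Icc
    (((G.measurable_section y).const_mul _).mul (G.measurable_section x))
    fun z => mul_mem_Icc (mul_mem_Icc (G.mem_Icc x y) (G.mem_Icc y z)) (G.mem_Icc x z)
  have hc : Integrable (fun _ : ℝ => G.W x y) μI := integrable_const _
  calc _ = ∫ z, (G.W x y - G.W x y * G.W y z - G.W x y * G.W x z
            + G.W x y * G.W y z * G.W x z) ∂μI := by congr 1; ext z; ring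
    _ = _ := by
      rw [integral_sub_sub_add hc hy hx ht, integral_const_mul, integral_const_mul]
      simp [deg, triangleAt]

lemma measurable_mul_deg : Measurable (fun p : ℝ × ℝ => G.W p.1 p.2 * deg G p.2) :=
  (G.measurable_comp measurable_fst measurable_snd).mul (G.measurable_deg.comp measurable_snd)

/-- Counting cherries from a leaf or from the centre gives the same density; this is Fubini
together with the symmetry of `W`. -/
lemma integral_integral_mul_deg :
    ∫ x, ∫ y, G.W x y * deg G y ∂μI ∂μI = ∫ x, deg G x ^ 2 ∂μI := by
  rw [integral_integral_swap]
  · congr 1; ext y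
    rw [integral_mul_const, sq]
    simp only [deg, G.symm _ y]
  · exact Integrable.of_bound G.measurable_mul_deg.aestronglyMeasurable 1
      (Filter.Eventually.of_forall fun p => by
        have := mul_mem_Icc (G.mem_Icc p.1 p.2) (G.deg_mem_Icc p.2)
        rw [Function.uncurry_def, Real.norm_eq_abs, abs_of_nonneg this.1]
        exact this.2)

lemma integral_coCherry_middle (x : ℝ) :
    ∫ y, ∫ z, G.W x y * (1 - G.W y z) * (1 - G.W x z) ∂μI ∂μI =
      deg G x - (∫ y, G.W x y * deg G y ∂μI) - deg G x ^ 2 + ∫ y, G.triangleAt x y ∂μI := by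
  simp_rw [G.integral_coCherry_inner]
  have hW := integrable_of_mem_Icc (G.measurable_section x) (G.mem_Icc x)
  have hd : Integrable (fun y => G.W x y * deg G y) μI :=
    integrable_of_mem_Icc ((G.measurable_section x).mul G.measurable_deg)
      fun y => mul_mem_Icc (G.mem_Icc x y) (G.deg_mem_Icc y)
  have ht : Integrable (G.triangleAt x) μI :=
    integrable_of_mem_Icc (G.measurable_triangleAt.comp measurable_prodMk_left)
      (G.triangleAt_mem_Icc x)
  rw [integral_sub_sub_add hW hd (hW.mul_const _) ht, integral_mul_const, sq]
  rfl

lemma integrable_sq_deg_sub : Integrable (fun x => (deg G x - 1 / 4) ^ 2) μI :=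
  integrable_of_mem_Icc ((G.measurable_deg.sub_const _).pow_const 2) fun x => by
    have h := G.deg_mem_Icc x
    exact ⟨sq_nonneg _, by nlinarith [h.1, h.2]⟩

/-- The gap in the inequality `d₁ ≤ 3 d₃ + 3/8` is six times the mean squared deviation of the
degree from `1/4`. -/
lemma d1_eq : d1 G = 3 * d3 G + 3 / 8 - 6 * ∫ x, (deg G x - 1 / 4) ^ 2 ∂μI := by
  have hd : Integrable (deg G) μI := integrable_of_mem_Icc G.measurable_deg G.deg_mem_Icc
  have hd2 : Integrable (fun x => deg G x ^ 2) μI :=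
    integrable_of_mem_Icc (G.measurable_deg.pow_const 2) fun x => by
      rw [sq]; exact mul_mem_Icc (G.deg_mem_Icc x) (G.deg_mem_Icc x)
  have hc : Integrable (fun x => ∫ y, G.W x y * deg G y ∂μI) μI :=
    integrable_of_mem_Icc
      (G.measurable_mul_deg.stronglyMeasurable.integral_prod_right' (ν := μI)).measurable
      fun x => integral_mem_Icc ((G.measurable_section x).mul G.measurable_deg)
        fun y => mul_mem_Icc (G.mem_Icc x y) (G.deg_mem_Icc y)
  have ht : Integrable (fun x => ∫ y, G.triangleAt x y ∂μI) μI :=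
    integrable_of_mem_Icc
      (G.measurable_triangleAt.stronglyMeasurable.integral_prod_right (ν := μI)).measurable
      fun x => integral_mem_Icc (G.measurable_triangleAt.comp measurable_prodMk_left)
        (G.triangleAt_mem_Icc x)
  have h1 : d1 G = 3 * ((∫ x, deg G x ∂μI) - 2 * (∫ x, deg G x ^ 2 ∂μI) + d3 G) := by
    unfold d1
    simp_rw [G.integral_coCherry_middle]
    rw [integral_sub_sub_add hd hc hd2 ht, G.integral_integral_mul_deg]
    simp only [d3, triangleAt]
    ring
  have h2 : ∫ x, (deg G x - 1 / 4) ^ 2 ∂μI =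
      (∫ x, deg G x ^ 2 ∂μI) - (1 / 2) * (∫ x, deg G x ∂μI) + 1 / 16 := by
    calc _ = ∫ x, (deg G x ^ 2 - (1 / 2) * deg G x - 0 + 1 / 16) ∂μI := by congr 1; ext x; ring
      _ = _ := by
        rw [integral_sub_sub_add hd2 (hd.const_mul _) (integrable_const _) (integrable_const _),
          integral_const_mul]
        simp
  rw [h1, h2]
  ring

end Graphon

theorem boundary_linear_segment_characterization (G : Graphon) :
    d1 G = 3 * d3 G + 3 / 8 ↔
      (∀ᵐ x ∂(MeasureTheory.volume.restrict (Set.Icc (0 : ℝ) 1)), deg G x = 1 / 4) := by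
  have key : d1 G = 3 * d3 G + 3 / 8 ↔ ∫ x, (deg G x - 1 / 4) ^ 2 ∂μI = 0 := by
    rw [G.d1_eq]
    constructor <;> intro h <;> linarith
  rw [key, integral_eq_zero_iff_of_nonneg (fun x => sq_nonneg _) G.integrable_sq_deg_sub]
  refine Filter.eventually_congr (Filter.Eventually.of_forall fun x => ?_)
  simp [sub_eq_zero]
end
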